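/- Let k be a field of characteristic different from 2 and 3, let a1, a2 ∈ k, and let X, Y, Z ∈ k with T1 = X + Y + Z ≠ 0, T2 = X·Y + Y·Z + Z·X, T3 = X·Y·Z. If a1·T1⁴ + a2·T1²·T2 + 2·T1·T3 + T2² = 0, then the pair (u, v) with u = (X + Y − Z)/T1 and v = (2·(Z² − X·Y) + a2·T1² + 4·T2)/T1² satisfies v² = u³ − (3 + 2·a2)·u + (−4·a1 + 2 + 2·a2 + a2²). -/

import Mathlib

/-!
Substituting `u = (X + Y - Z) / T1` and `v` into the equation of the cubic `E1` and multiplying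
by `T1 ^ 4` gives a polynomial identity in `X, Y, Z, a1, a2`: the difference of the two sides is
exactly four times the quartic form `a1 * T1 ^ 4 + a2 * T1 ^ 2 * T2 + 2 * T1 * T3 + T2 ^ 2`. Since
`T1 ≠ 0`, the vanishing of the quartic gives the equation in `u` and `v`.
-/


theorem stmt_1 (k : Type*) [Field k] (h2 : (2 : k) ≠ 0) (h3 : (3 : k) ≠ 0)
    (a1 a2 : k) (X Y Z : k)
    (T1 T2 T3 : k)
    (hT1 : T1 = X + Y + Z) (hT2 : T2 = X * Y + Y * Z + Z * X) (hT3 : T3 = X * Y * Z)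
    (hT1ne : T1 ≠ 0)
    (hC : a1 * T1 ^ 4 + a2 * T1 ^ 2 * T2 + 2 * T1 * T3 + T2 ^ 2 = 0)
    (u v : k)
    (hu : u = (X + Y - Z) / T1)
    (hv : v = (2 * (Z ^ 2 - X * Y) + a2 * T1 ^ 2 + 4 * T2) / T1 ^ 2) :
    v ^ 2 = u ^ 3 - (3 + 2 * a2) * u + (-4 * a1 + 2 + 2 * a2 + a2 ^ 2) := by
  subst hT2 hT3
  -- Clear the denominators of `u` and `v`: write `u * T1` and `v * T1 ^ 2` as polynomials.
  have hu' : u * T1 = X + Y - Z := by rw [hu]; field_simp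
  have hv' : v * T1 ^ 2
      = 2 * (Z ^ 2 - X * Y) + a2 * T1 ^ 2 + 4 * (X * Y + Y * Z + Z * X) := by
    rw [hv]; field_simp
  have h : (v * T1 ^ 2) ^ 2 = T1 * (u * T1) ^ 3 - (3 + 2 * a2) * (u * T1) * T1 ^ 3
      + (-4 * a1 + 2 + 2 * a2 + a2 ^ 2) * T1 ^ 4 := by
    rw [hu', hv']
    subst hT1
    -- After multiplication by `T1 ^ 4`, the difference of the two sides is 4 times the quartic.
    linear_combination 4 * hC
  apply mul_right_cancel₀ (pow_ne_zero 4 hT1ne)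
  linear_combination h
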